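/- For d ≥ 1, the spherical average (1/|S^d|)·∫_{S^d} ln(dist(span{v}, x)) dS(v) equals ln|x| + C_{d,ln} for every x ∈ ℝ^{d+1} \ {0}, where C_{d,ln} = (|S^{d-1}|/|S^d|)·∫_0^π sin^{d-1}(φ)·ln(sin φ) dφ. -/

import Mathlib

open Real MeasureTheory Set

/-!
Since `dist(span v, x) = ‖x‖ sin ∠(x, v)`, the integrand depends on `v` only through its angle
with `x`. The push-forward of the surface measure of `S^d` under that angle is
`|S^{d-1}| sin^{d-1} φ dφ` on `(0, π)`. To see this, integrate `exp (-‖y‖) f (∠(x, y))` over the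
whole space twice: radially, which gives `d!` times the spherical integral of `f`, and in
cylindrical coordinates around the axis `x`, followed by polar coordinates in the half-plane.
Splitting `log (‖x‖ sin φ)` and comparing total masses for the constant part gives the result.
-/

open Module InnerProductGeometry
open scoped ENNReal

theorem lintegral_volumeIoiPow (n : ℕ) {f : ℝ → ℝ≥0∞} (hf : Measurable f) :
    ∫⁻ r, f r ∂Measure.volumeIoiPow n = ∫⁻ r in Ioi (0 : ℝ), ENNReal.ofReal (r ^ n) * f r := by
  rw [Measure.volumeIoiPow, lintegral_withDensity_eq_lintegral_mul _ (by fun_prop) (by fun_prop),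
    ← lintegral_subtype_comap measurableSet_Ioi]
  simp only [Pi.mul_apply]

section Polar

variable {E : Type*} [NormedAddCommGroup E] [NormedSpace ℝ E] [FiniteDimensional ℝ E]
  [Nontrivial E] [MeasurableSpace E] [BorelSpace E] (μ : Measure E) [μ.IsAddHaarMeasure]

theorem lintegral_eq_lintegral_toSphere {f : E → ℝ≥0∞} (hf : Measurable f) :
    ∫⁻ y, f y ∂μ = ∫⁻ v : Metric.sphere (0 : E) 1, (∫⁻ r in Ioi (0 : ℝ),
      ENNReal.ofReal (r ^ (finrank ℝ E - 1)) * f (r • (v : E))) ∂μ.toSphere :=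
  calc
    ∫⁻ y, f y ∂μ = ∫⁻ y : ({0}ᶜ : Set E), f y ∂(μ.comap (↑)) := by
      rw [lintegral_subtype_comap (measurableSet_singleton _).compl f, restrict_compl_singleton]
    _ = ∫⁻ p : Metric.sphere (0 : E) 1 × Ioi (0 : ℝ), f ((p.2 : ℝ) • (p.1 : E))
          ∂μ.toSphere.prod (.volumeIoiPow (finrank ℝ E - 1)) := by
      rw [← μ.measurePreserving_homeomorphUnitSphereProd.lintegral_comp (by fun_prop)]
      simp only [← homeomorphUnitSphereProd_symm_apply_coe, Homeomorph.symm_apply_apply]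
    _ = _ := by
      rw [lintegral_prod _ (by fun_prop)]
      exact lintegral_congr fun v ↦
        lintegral_volumeIoiPow _ (f := fun r : ℝ ↦ f (r • (v : E))) (by fun_prop)

theorem lintegral_fun_norm_addHaar {f : ℝ → ℝ≥0∞} (hf : Measurable f) :
    ∫⁻ y, f ‖y‖ ∂μ = μ.toSphere univ *
      ∫⁻ r in Ioi (0 : ℝ), ENNReal.ofReal (r ^ (finrank ℝ E - 1)) * f r := by
  have radial (v : Metric.sphere (0 : E) 1) :
      ∫⁻ r in Ioi (0 : ℝ), ENNReal.ofReal (r ^ (finrank ℝ E - 1)) * f ‖r • (v : E)‖ =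
        ∫⁻ r in Ioi (0 : ℝ), ENNReal.ofReal (r ^ (finrank ℝ E - 1)) * f r :=
    setLIntegral_congr_fun measurableSet_Ioi fun r hr ↦ by
      simp [norm_smul, abs_of_pos (mem_Ioi.1 hr)]
  simp_rw [lintegral_eq_lintegral_toSphere μ (f := fun y ↦ f ‖y‖) (by fun_prop), radial,
    lintegral_const, mul_comm]

end Polar

theorem lintegral_upperHalfPlane_eq_polarCoord {f : ℝ × ℝ → ℝ≥0∞} (hf : Measurable f) :
    ∫⁻ t : ℝ, ∫⁻ s in Ioi (0 : ℝ), f (t, s) =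
      ∫⁻ r in Ioi (0 : ℝ), ∫⁻ φ in Ioo 0 π, ENNReal.ofReal r * f (r * cos φ, r * sin φ) := by
  have mem_upper {r φ : ℝ} (hr : 0 < r) (hφ : φ ∈ Ioo (-π) π) :
      r * sin φ ∈ Ioi 0 ↔ φ ∈ Ioo 0 π := by
    rw [mem_Ioi, mul_pos_iff_of_pos_left hr]
    refine ⟨fun hsin ↦ ⟨?_, hφ.2⟩, sin_pos_of_mem_Ioo⟩
    by_contra! hneg
    exact hsin.not_ge (sin_nonpos_of_nonpos_of_neg_pi_le hneg hφ.1.le)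
  have hmeas : Measurable ((univ ×ˢ Ioi (0 : ℝ)).indicator f) :=
    hf.indicator (MeasurableSet.univ.prod measurableSet_Ioi)
  calc
    ∫⁻ t : ℝ, ∫⁻ s in Ioi (0 : ℝ), f (t, s) = ∫⁻ p, (univ ×ˢ Ioi (0 : ℝ)).indicator f p := by
      rw [lintegral_indicator (MeasurableSet.univ.prod measurableSet_Ioi), Measure.volume_eq_prod,
        ← Measure.prod_restrict, lintegral_prod _ hf.aemeasurable, Measure.restrict_univ]
    _ = ∫⁻ r in Ioi (0 : ℝ), ∫⁻ φ in Ioo (-π) π, ENNReal.ofReal r *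
          (univ ×ˢ Ioi (0 : ℝ)).indicator f (r * cos φ, r * sin φ) := by
      rw [← lintegral_comp_polarCoord_symm, polarCoord_target, Measure.volume_eq_prod,
        ← Measure.prod_restrict, lintegral_prod]
      · simp only [polarCoord_symm_apply, smul_eq_mul]
      · simp only [polarCoord_symm_apply, smul_eq_mul]
        fun_prop
    _ = _ := by
      refine setLIntegral_congr_fun measurableSet_Ioi fun r hr ↦ ?_
      have inter_eq : Ioo 0 π ∩ Ioo (-π) π = Ioo 0 π :=
        inter_eq_left.2 (Ioo_subset_Ioo_left (neg_nonpos.2 pi_pos.le))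
      rw [← inter_eq, ← setLIntegral_indicator (measurableSet_Ioo (a := (0 : ℝ)) (b := π))]
      refine setLIntegral_congr_fun measurableSet_Ioo fun φ hφ ↦ ?_
      simp only [indicator_apply, mem_prod, mem_univ, true_and, mem_upper hr hφ, mul_ite, mul_zero]

theorem lintegral_pow_mul_exp_neg (n : ℕ) :
    ∫⁻ r in Ioi (0 : ℝ), ENNReal.ofReal (r ^ n * exp (-r)) = n.factorial := by
  have rpow_form : EqOn (fun r : ℝ ↦ exp (-r) * r ^ ((n + 1 : ℝ) - 1))
      (fun r ↦ r ^ n * exp (-r)) (Ioi 0) := fun r _ ↦ by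
    simp only [add_sub_cancel_right, rpow_natCast, mul_comm]
  have hint : IntegrableOn (fun r : ℝ ↦ r ^ n * exp (-r)) (Ioi 0) :=
    (GammaIntegral_convergent (by positivity)).congr_fun rpow_form measurableSet_Ioi
  rw [← ofReal_integral_eq_lintegral_ofReal hint
      ((ae_restrict_mem measurableSet_Ioi).mono fun r (hr : 0 < r) ↦ by positivity),
    ← setIntegral_congr_fun measurableSet_Ioi rpow_form, ← Gamma_eq_integral (by positivity),
    Gamma_nat_eq_factorial, ENNReal.ofReal_natCast]

section Angle

variable {E F : Type*} [NormedAddCommGroup E] [InnerProductSpace ℝ E]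
  [NormedAddCommGroup F] [InnerProductSpace ℝ F]

theorem infDist_span_singleton (x v : E) :
    Metric.infDist x (Submodule.span ℝ {v} : Submodule ℝ E) = ‖x‖ * sin (angle x v) := by
  have dist_proj : Metric.infDist x (Submodule.span ℝ {v} : Submodule ℝ E) =
      ‖x - (inner ℝ v x / ‖v‖ ^ 2) • v‖ := by
    have h := Submodule.starProjection_minimal (U := Submodule.span ℝ {v}) x
    rw [Submodule.starProjection_singleton] at h
    simpa [Metric.infDist_eq_iInf, dist_eq_norm] using h.symm
  rw [dist_proj, ← sq_eq_sq₀ (norm_nonneg _) (by have := sin_angle_nonneg x v; positivity),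
    mul_pow, sin_sq, norm_sub_sq_real, norm_smul, inner_smul_right, real_inner_comm x v, cos_angle]
  by_cases hx : x = 0
  · simp [hx]
  by_cases hv : v = 0
  · simp [hv]
  have := norm_ne_zero_iff.2 hx
  have := norm_ne_zero_iff.2 hv
  simp only [norm_eq_abs, mul_pow, sq_abs]
  field_simp
  ring

theorem exists_linearIsometryEquiv_withLp_prod [FiniteDimensional ℝ E] [FiniteDimensional ℝ F]
    (hEF : finrank ℝ E = finrank ℝ F + 1) {x : E} (hx : x ≠ 0) :
    ∃ T : E ≃ₗᵢ[ℝ] WithLp 2 (ℝ × F), T x = WithLp.toLp 2 (‖x‖, 0) := by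
  let e : E := ‖x‖⁻¹ • x
  have norm_e : ‖e‖ = 1 := norm_smul_inv_norm hx
  have : Fact (finrank ℝ E = finrank ℝ F + 1) := ⟨hEF⟩
  let complementIso : (Submodule.span ℝ {e})ᗮ ≃ₗᵢ[ℝ] F :=
    (OrthonormalBasis.fromOrthogonalSpanSingleton (𝕜 := ℝ) (finrank ℝ F)
      (norm_ne_zero_iff.1 (norm_e ▸ one_ne_zero))).equiv
      (stdOrthonormalBasis ℝ F) (Equiv.refl _)
  let T := (Submodule.span ℝ {e}).orthogonalDecomposition.trans
    (LinearIsometryEquiv.withLpProdCongr 2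
      (LinearIsometryEquiv.toSpanUnitSingleton e norm_e).symm complementIso)
  have T_symm : T.symm (WithLp.toLp 2 (‖x‖, 0)) = x := by
    simp [T, e, norm_ne_zero_iff.2 hx]
  exact ⟨T, by rw [← T_symm, T.apply_symm_apply, T_symm]⟩

theorem angle_toLp_zero {c : ℝ} (hc : 0 < c) (p : ℝ × F) :
    angle (WithLp.toLp 2 (c, (0 : F))) (WithLp.toLp 2 p) =
      arccos (p.1 / √(p.1 ^ 2 + ‖p.2‖ ^ 2)) := by
  have inner_eq : inner ℝ (WithLp.toLp 2 (c, (0 : F))) (WithLp.toLp 2 p) = c * p.1 := by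
    simp [mul_comm]
  rw [angle, inner_eq, WithLp.norm_toLp_fst, norm_of_nonneg hc.le, mul_div_mul_left _ _ hc.ne',
    WithLp.prod_norm_eq_of_L2]
  simp

theorem measurable_angle [MeasurableSpace E] [BorelSpace E] [SecondCountableTopology E] (x : E) :
    Measurable (angle x) := by
  unfold angle
  fun_prop

end Angle

section Sphere

variable {E F : Type*}
  [NormedAddCommGroup E] [InnerProductSpace ℝ E] [FiniteDimensional ℝ E]
  [MeasurableSpace E] [BorelSpace E]
  [NormedAddCommGroup F] [InnerProductSpace ℝ F] [FiniteDimensional ℝ F] [Nontrivial F]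
  [MeasurableSpace F] [BorelSpace F]

theorem lintegral_fun_norm_angle (hEF : finrank ℝ E = finrank ℝ F + 1) {x : E} (hx : x ≠ 0)
    {f : ℝ × ℝ → ℝ≥0∞} (hf : Measurable f) :
    ∫⁻ y : E, f (‖y‖, angle x y) = (volume : Measure F).toSphere univ *
      ∫⁻ r in Ioi (0 : ℝ), ∫⁻ φ in Ioo 0 π,
        ENNReal.ofReal (r ^ finrank ℝ F * sin φ ^ (finrank ℝ F - 1)) * f (r, φ) := by
  obtain ⟨T, hT⟩ := exists_linearIsometryEquiv_withLp_prod (F := F) hEF hx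
  let g (p : ℝ × ℝ) : ℝ≥0∞ := f (√(p.1 ^ 2 + p.2 ^ 2), arccos (p.1 / √(p.1 ^ 2 + p.2 ^ 2)))
  have hg : Measurable g := by fun_prop
  have g_polar {r φ : ℝ} (hr : 0 < r) (hφ : φ ∈ Ioo 0 π) :
      g (r * cos φ, r * sin φ) = f (r, φ) := by
    have norm_eq : √((r * cos φ) ^ 2 + (r * sin φ) ^ 2) = r := by
      rw [mul_pow, mul_pow, ← mul_add, cos_sq_add_sin_sq, mul_one, sqrt_sq hr.le]
    simp only [g, norm_eq, mul_div_cancel_left₀ _ hr.ne', arccos_cos hφ.1.le hφ.2.le]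
  have pow_split (r : ℝ) : r * r ^ (finrank ℝ F - 1) = r ^ finrank ℝ F :=
    mul_pow_sub_one finrank_pos.ne' r
  calc
    ∫⁻ y : E, f (‖y‖, angle x y) = ∫⁻ p : ℝ × F, g (p.1, ‖p.2‖) := by
      rw [← (WithLp.volume_preserving_ofLp ℝ F |>.comp T.measurePreserving).lintegral_comp
        (by fun_prop)]
      refine lintegral_congr fun y ↦ ?_
      have angle_eq : angle x y = angle (T x) (T y) := (T.toLinearIsometry.angle_map x y).symm
      rw [← T.norm_map y, angle_eq, hT, ← WithLp.toLp_ofLp 2 (T y),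
        angle_toLp_zero (norm_pos_iff.2 hx), WithLp.prod_norm_eq_of_L2]
      simp [g]
    _ = ∫⁻ t : ℝ, (volume : Measure F).toSphere univ * ∫⁻ s in Ioi (0 : ℝ),
          ENNReal.ofReal (s ^ (finrank ℝ F - 1)) * g (t, s) := by
      rw [Measure.volume_eq_prod, lintegral_prod _ (by fun_prop)]
      exact lintegral_congr fun t ↦
        lintegral_fun_norm_addHaar volume (f := fun s ↦ g (t, s)) (by fun_prop)
    _ = (volume : Measure F).toSphere univ * ∫⁻ r in Ioi (0 : ℝ), ∫⁻ φ in Ioo 0 π,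
          ENNReal.ofReal r * (ENNReal.ofReal ((r * sin φ) ^ (finrank ℝ F - 1)) *
            g (r * cos φ, r * sin φ)) := by
      rw [lintegral_const_mul' _ _ (measure_ne_top _ _), lintegral_upperHalfPlane_eq_polarCoord
        (f := fun p ↦ ENNReal.ofReal (p.2 ^ (finrank ℝ F - 1)) * g p) (by fun_prop)]
    _ = _ := by
      congr 1
      refine setLIntegral_congr_fun measurableSet_Ioi fun r (hr : 0 < r) ↦
        setLIntegral_congr_fun measurableSet_Ioo fun φ hφ ↦ ?_
      rw [g_polar hr hφ, ← mul_assoc, ← ENNReal.ofReal_mul hr.le, mul_pow, ← mul_assoc, pow_split]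

theorem lintegral_toSphere_fun_angle (hEF : finrank ℝ E = finrank ℝ F + 1) {x : E} (hx : x ≠ 0)
    {f : ℝ → ℝ≥0∞} (hf : Measurable f) :
    ∫⁻ v : Metric.sphere (0 : E) 1, f (angle x v) ∂(volume : Measure E).toSphere =
      (volume : Measure F).toSphere univ *
        ∫⁻ φ in Ioo 0 π, ENNReal.ofReal (sin φ ^ (finrank ℝ F - 1)) * f φ := by
  have : Nontrivial E := ⟨x, 0, hx⟩
  have := measurable_angle x
  let n := finrank ℝ F
  have weighted_sphere :
      ∫⁻ y : E, ENNReal.ofReal (exp (-‖y‖)) * f (angle x y) = n.factorial *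
        ∫⁻ v : Metric.sphere (0 : E) 1, f (angle x v) ∂(volume : Measure E).toSphere := by
    rw [lintegral_eq_lintegral_toSphere _ (by fun_prop), hEF, Nat.add_sub_cancel,
      ← lintegral_const_mul _ (by fun_prop)]
    refine lintegral_congr fun v ↦ ?_
    rw [← lintegral_pow_mul_exp_neg, ← lintegral_mul_const _ (by fun_prop)]
    refine setLIntegral_congr_fun measurableSet_Ioi fun r (hr : 0 < r) ↦ ?_
    simp only [angle_smul_right_of_pos _ _ hr, norm_smul, norm_of_nonneg hr.le,
      norm_eq_of_mem_sphere, mul_one]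
    rw [ENNReal.ofReal_mul (by positivity), mul_assoc]
  have weighted_axial :
      ∫⁻ y : E, ENNReal.ofReal (exp (-‖y‖)) * f (angle x y) = n.factorial *
        ((volume : Measure F).toSphere univ *
          ∫⁻ φ in Ioo 0 π, ENNReal.ofReal (sin φ ^ (n - 1)) * f φ) := by
    rw [lintegral_fun_norm_angle hEF hx (f := fun p ↦ ENNReal.ofReal (exp (-p.1)) * f p.2)
      (by fun_prop), mul_left_comm, ← lintegral_pow_mul_exp_neg,
      ← lintegral_mul_const _ (by fun_prop)]
    congr 1
    refine setLIntegral_congr_fun measurableSet_Ioi fun r (hr : 0 < r) ↦ ?_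
    rw [← lintegral_const_mul _ (by fun_prop)]
    refine lintegral_congr fun φ ↦ ?_
    rw [ENNReal.ofReal_mul (by positivity), ENNReal.ofReal_mul (by positivity)]
    ring
  exact (ENNReal.mul_right_inj (by simp [Nat.factorial_ne_zero]) (by simp)).1
    (weighted_sphere.symm.trans weighted_axial)

theorem map_angle_toSphere (hEF : finrank ℝ E = finrank ℝ F + 1) {x : E} (hx : x ≠ 0) :
    (volume : Measure E).toSphere.map (fun v : Metric.sphere (0 : E) 1 ↦ angle x v) =
      (volume : Measure F).toSphere univ • (volume.restrict (Ioo 0 π)).withDensity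
        fun φ ↦ ENNReal.ofReal (sin φ ^ (finrank ℝ F - 1)) := by
  have := measurable_angle x
  refine Measure.ext_of_lintegral _ fun f hf ↦ ?_
  rw [lintegral_map hf (by fun_prop), lintegral_toSphere_fun_angle hEF hx hf,
    lintegral_smul_measure, lintegral_withDensity_eq_lintegral_mul _ (by fun_prop) hf]
  rfl

theorem integral_toSphere_fun_angle {G : Type*} [NormedAddCommGroup G] [NormedSpace ℝ G]
    (hEF : finrank ℝ E = finrank ℝ F + 1) {x : E} (hx : x ≠ 0)
    {f : ℝ → G} (hf : AEStronglyMeasurable f (volume.restrict (Ioo 0 π))) :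
    ∫ v : Metric.sphere (0 : E) 1, f (angle x v) ∂(volume : Measure E).toSphere =
      (volume : Measure F).toSphere.real univ •
        ∫ φ in (0 : ℝ)..π, sin φ ^ (finrank ℝ F - 1) • f φ := by
  have := measurable_angle x
  have hf_map : AEStronglyMeasurable f
      ((volume : Measure E).toSphere.map fun v : Metric.sphere (0 : E) 1 ↦ angle x v) := by
    rw [map_angle_toSphere hEF hx]
    exact (hf.mono_ac (withDensity_absolutelyContinuous _ _)).smul_measure _
  rw [← integral_map (by fun_prop) hf_map, map_angle_toSphere hEF hx,
    integral_smul_measure, integral_withDensity_eq_integral_toReal_smul (by fun_prop) (by simp),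
    intervalIntegral.integral_of_le pi_pos.le, integral_Ioc_eq_integral_Ioo, Measure.real]
  congr 1
  refine setIntegral_congr_fun measurableSet_Ioo fun φ hφ ↦ ?_
  rw [ENNReal.toReal_ofReal (pow_nonneg (sin_pos_of_mem_Ioo hφ).le _)]

theorem toSphere_real_univ_eq_mul_integral_sin_pow
    (hEF : finrank ℝ E = finrank ℝ F + 1) :
    (volume : Measure E).toSphere.real univ = (volume : Measure F).toSphere.real univ *
      ∫ φ in (0 : ℝ)..π, sin φ ^ (finrank ℝ F - 1) := by
  have : Nontrivial E := nontrivial_of_finrank_eq_succ hEF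
  obtain ⟨x, hx⟩ := exists_ne (0 : E)
  simpa using integral_toSphere_fun_angle (F := F) hEF hx
    (aestronglyMeasurable_const (b := (1 : ℝ)))

end Sphere

theorem integral_sin_pow_mul_log_mul_sin (n : ℕ) {c : ℝ} (hc : c ≠ 0) :
    ∫ φ in (0 : ℝ)..π, sin φ ^ n * log (c * sin φ) =
      log c * (∫ φ in (0 : ℝ)..π, sin φ ^ n) + ∫ φ in (0 : ℝ)..π, sin φ ^ n * log (sin φ) := by
  have integrable_log : IntervalIntegrable (fun φ ↦ sin φ ^ n * log (sin φ)) volume 0 π :=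
    intervalIntegrable_log_sin.continuousOn_mul (by fun_prop)
  rw [← intervalIntegral.integral_const_mul, ← intervalIntegral.integral_add
    (Continuous.intervalIntegrable (by fun_prop) _ _) integrable_log]
  refine intervalIntegral.integral_congr_Ioo_of_le pi_pos.le fun φ hφ ↦ ?_
  rw [log_mul hc (sin_pos_of_mem_Ioo hφ).ne']
  ring

theorem stmt_13_general {E F : Type*}
    [NormedAddCommGroup E] [InnerProductSpace ℝ E] [FiniteDimensional ℝ E]
    [MeasurableSpace E] [BorelSpace E]
    [NormedAddCommGroup F] [InnerProductSpace ℝ F] [FiniteDimensional ℝ F] [Nontrivial F]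
    [MeasurableSpace F] [BorelSpace F]
    (hEF : finrank ℝ E = finrank ℝ F + 1) {x : E} (hx : x ≠ 0) :
    ⨍ v : Metric.sphere (0 : E) 1,
        log (Metric.infDist x (Submodule.span ℝ {(v : E)} : Submodule ℝ E))
        ∂(volume : Measure E).toSphere =
      log ‖x‖ + (volume : Measure F).toSphere.real univ / (volume : Measure E).toSphere.real univ *
        ∫ φ in (0 : ℝ)..π, sin φ ^ (finrank ℝ F - 1) * log (sin φ) := by
  have : Nontrivial E := ⟨x, 0, hx⟩
  have : NeZero (volume : Measure E).toSphere := ⟨Measure.toSphere_ne_zero _⟩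
  have sphere_ne_zero : (volume : Measure E).toSphere.real univ ≠ 0 := measureReal_univ_ne_zero
  simp_rw [average_eq, infDist_span_singleton, smul_eq_mul]
  have log_meas : Measurable fun φ ↦ log (‖x‖ * sin φ) := by fun_prop
  rw [integral_toSphere_fun_angle (F := F) hEF hx log_meas.aestronglyMeasurable]
  simp only [smul_eq_mul]
  rw [integral_sin_pow_mul_log_mul_sin _ (norm_ne_zero_iff.2 hx), mul_add, mul_left_comm,
    ← toSphere_real_univ_eq_mul_integral_sin_pow hEF]
  field_simp

/-- For `d ≥ 1`, the average over the unit sphere `S^d ⊂ ℝ^{d+1}` of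
`ln(dist(span v, x))` equals `ln|x| + C_{d,ln}`, where
`C_{d,ln} = (|S^{d-1}|/|S^d|)·∫_0^π sin^{d-1}(φ)·ln(sin φ) dφ`. The surface measures of
`S^{d-1} ⊂ ℝ^d` and `S^d ⊂ ℝ^{d+1}` are the total masses of the respective `volume.toSphere`. -/
theorem stmt_13 (d : ℕ) (hd : 1 ≤ d) :
    ∀ x : EuclideanSpace ℝ (Fin (d + 1)), x ≠ 0 →
      (1 / (((volume : Measure (EuclideanSpace ℝ (Fin (d + 1)))).toSphere Set.univ).toReal)) *
        ∫ v : Metric.sphere (0 : EuclideanSpace ℝ (Fin (d + 1))) 1,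
          Real.log (Metric.infDist x
            (Submodule.span ℝ {(v : EuclideanSpace ℝ (Fin (d + 1)))} :
              Submodule ℝ (EuclideanSpace ℝ (Fin (d + 1)))))
          ∂((volume : Measure (EuclideanSpace ℝ (Fin (d + 1)))).toSphere) =
      Real.log ‖x‖ +
        (((volume : Measure (EuclideanSpace ℝ (Fin d))).toSphere Set.univ).toReal /
          ((volume : Measure (EuclideanSpace ℝ (Fin (d + 1)))).toSphere Set.univ).toReal) *
          ∫ φ in (0 : ℝ)..Real.pi, Real.sin φ ^ (d - 1) * Real.log (Real.sin φ) := by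
  intro x hx
  have : NeZero d := ⟨Nat.one_le_iff_ne_zero.1 hd⟩
  simpa only [average_eq, smul_eq_mul, one_div, finrank_euclideanSpace_fin, Measure.real] using
    stmt_13_general (F := EuclideanSpace ℝ (Fin d)) (by simp) hx
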